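/- arXiv:2603.07768 — 3 statements merged into one kernel-verified Lean document; each statement's English description precedes it below -/
import Mathlib

section
/- Let ν > 0, Δt > 0, λ > 0 and σ := √(λ² + 1/ν). Then σ² + ν⁻¹·sinh²(σΔt) < (σ·cosh(σΔt) + λ·sinh(σΔt))². Equivalently, with C₁ := −ν⁻¹·sinh(σΔt)/(σ·cosh(σΔt) + λ·sinh(σΔt)) and C₂ := σ/(σ·cosh(σΔt) + λ·sinh(σΔt)), one has ν·C₁² + C₂² < 1. -/
noncomputable section

/-- σ := √(λ² + 1/ν). -/
def sig (ν lam : ℝ) : ℝ := Real.sqrt (lam ^ 2 + 1 / ν)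

/-- C₁ := −ν⁻¹·sinh(σΔt)/(σ·cosh(σΔt) + λ·sinh(σΔt)). -/
def C1 (ν Δt lam : ℝ) : ℝ :=
  -(ν⁻¹ * Real.sinh (sig ν lam * Δt)) /
    (sig ν lam * Real.cosh (sig ν lam * Δt) + lam * Real.sinh (sig ν lam * Δt))

/-- C₂ := σ/(σ·cosh(σΔt) + λ·sinh(σΔt)). -/
def C2 (ν Δt lam : ℝ) : ℝ :=
  sig ν lam /
    (sig ν lam * Real.cosh (sig ν lam * Δt) + lam * Real.sinh (sig ν lam * Δt))

/-!
Put `s = sinh (σ Δt)`, `c = cosh (σ Δt)` and `D = σ c + λ s`. Since `c² = 1 + s²`,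
`D² = σ² + (σ² - λ²) s² + 2 (λ s) D`, and `σ² - λ² = ν⁻¹` by the choice of `σ`. So the claim is
that `(λ s) D` is positive, which holds because `s` has the sign of `Δt`, so that `λ s > 0`.
-/

section Hyperbolic

variable {a b x : ℝ}

theorem mul_sinh_pos_iff : 0 < a * Real.sinh x ↔ 0 < a * x := by
  simp only [mul_pos_iff, Real.sinh_pos_iff, Real.sinh_neg_iff]

theorem mul_cosh_add_mul_sinh_sq (a b x : ℝ) :
    (a * Real.cosh x + b * Real.sinh x) ^ 2 =
      a ^ 2 + (a ^ 2 - b ^ 2) * Real.sinh x ^ 2 +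
        2 * ((b * Real.sinh x) * (a * Real.cosh x + b * Real.sinh x)) := by
  linear_combination a ^ 2 * Real.cosh_sq x

theorem mul_cosh_add_mul_sinh_pos (ha : 0 < a) (hbx : 0 < b * x) :
    0 < a * Real.cosh x + b * Real.sinh x :=
  add_pos (mul_pos ha (Real.cosh_pos x)) (mul_sinh_pos_iff.mpr hbx)

theorem sq_add_mul_sinh_sq_lt_mul_cosh_add_mul_sinh_sq (ha : 0 < a) (hbx : 0 < b * x) :
    a ^ 2 + (a ^ 2 - b ^ 2) * Real.sinh x ^ 2 <
      (a * Real.cosh x + b * Real.sinh x) ^ 2 := by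
  have cross_term_pos : 0 < (b * Real.sinh x) * (a * Real.cosh x + b * Real.sinh x) :=
    mul_pos (mul_sinh_pos_iff.mpr hbx) (mul_cosh_add_mul_sinh_pos ha hbx)
  rw [mul_cosh_add_mul_sinh_sq]
  linarith

end Hyperbolic

section Coefficients

variable {ν Δt lam : ℝ}

theorem sig_pos (h : 0 < lam ^ 2 + 1 / ν) : 0 < sig ν lam :=
  Real.sqrt_pos.mpr h

theorem sig_sq_sub_sq (h : 0 ≤ lam ^ 2 + 1 / ν) : sig ν lam ^ 2 - lam ^ 2 = ν⁻¹ := by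
  rw [sig, Real.sq_sqrt h, one_div, add_sub_cancel_left]

theorem mul_C1_sq_add_C2_sq (hν : ν ≠ 0) (Δt lam : ℝ) :
    ν * C1 ν Δt lam ^ 2 + C2 ν Δt lam ^ 2 =
      (sig ν lam ^ 2 + ν⁻¹ * Real.sinh (sig ν lam * Δt) ^ 2) /
        (sig ν lam * Real.cosh (sig ν lam * Δt) + lam * Real.sinh (sig ν lam * Δt)) ^ 2 := by
  rw [C1, C2, div_pow, div_pow, ← mul_div_assoc, ← add_div]
  congr 1
  field_simp
  ring

theorem mul_C1_sq_add_C2_sq_lt_one_iff (hν : ν ≠ 0)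
    (hD : sig ν lam * Real.cosh (sig ν lam * Δt) + lam * Real.sinh (sig ν lam * Δt) ≠ 0) :
    ν * C1 ν Δt lam ^ 2 + C2 ν Δt lam ^ 2 < 1 ↔
      sig ν lam ^ 2 + ν⁻¹ * Real.sinh (sig ν lam * Δt) ^ 2 <
        (sig ν lam * Real.cosh (sig ν lam * Δt) + lam * Real.sinh (sig ν lam * Δt)) ^ 2 := by
  rw [mul_C1_sq_add_C2_sq hν, div_lt_one (sq_pos_of_ne_zero hD)]

theorem rho_tilde_lt_one_general (hν : ν ≠ 0) (hσ : 0 < lam ^ 2 + 1 / ν)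
    (hlamΔt : 0 < lam * Δt) :
    sig ν lam ^ 2 + ν⁻¹ * Real.sinh (sig ν lam * Δt) ^ 2 <
      (sig ν lam * Real.cosh (sig ν lam * Δt) + lam * Real.sinh (sig ν lam * Δt)) ^ 2 ∧
    ν * C1 ν Δt lam ^ 2 + C2 ν Δt lam ^ 2 < 1 := by
  have hsig : 0 < sig ν lam := sig_pos hσ
  have lam_mul_pos : 0 < lam * (sig ν lam * Δt) := by
    rw [mul_left_comm]
    exact mul_pos hsig hlamΔt
  have denom_pos := mul_cosh_add_mul_sinh_pos hsig lam_mul_pos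
  have sq_lt := sq_add_mul_sinh_sq_lt_mul_cosh_add_mul_sinh_sq hsig lam_mul_pos
  rw [sig_sq_sub_sq hσ.le] at sq_lt
  exact ⟨sq_lt, (mul_C1_sq_add_C2_sq_lt_one_iff hν denom_pos.ne').mpr sq_lt⟩

end Coefficients

/-- σ² + ν⁻¹ sinh²(σΔt) < (σ cosh(σΔt) + λ sinh(σΔt))², equivalently
ν C₁² + C₂² < 1. -/
theorem rho_tilde_lt_one (ν Δt lam : ℝ)
    (hν : 0 < ν) (hΔt : 0 < Δt) (hlam : 0 < lam) :
    sig ν lam ^ 2 + ν⁻¹ * Real.sinh (sig ν lam * Δt) ^ 2 <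
      (sig ν lam * Real.cosh (sig ν lam * Δt) + lam * Real.sinh (sig ν lam * Δt)) ^ 2 ∧
    ν * C1 ν Δt lam ^ 2 + C2 ν Δt lam ^ 2 < 1 :=
  rho_tilde_lt_one_general hν.ne' (by positivity) (mul_pos hlam hΔt)
end
end

section
/- Let ν > 0, Δt > 0, λ > 0, σ := √(λ² + 1/ν), C₁ := −ν⁻¹·sinh(σΔt)/(σ·cosh(σΔt) + λ·sinh(σΔt)) and C₂ := σ/(σ·cosh(σΔt) + λ·sinh(σΔt)). Define the region 𝒟 := {z ∈ ℂ : there exists θ ∈ [−π, π] such that Re z = C₂·cos(θ) and |Im z| ≤ √(C₂²·sin²(θ) + ν·C₁²)}. Then for every integer N ≥ 2, every complex eigenvalue of T^PS_N belongs to 𝒟. -/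
noncomputable section

/-- The block tridiagonal Toeplitz iteration matrix `T^PS_N` of size `2(N-1) × 2(N-1)`,
with diagonal blocks `T_d = [[0, C₁], [−ν C₁, 0]]`, superdiagonal blocks
`T_r = [[C₂, 0], [0, 0]]` and subdiagonal blocks `T_l = [[0, 0], [0, C₂]]`. -/
def TPS (ν Δt lam : ℝ) (N : ℕ) : Matrix (Fin (2 * (N - 1))) (Fin (2 * (N - 1))) ℝ :=
  fun i j =>
    if (i : ℕ) / 2 = (j : ℕ) / 2 then
      -- diagonal block T_d
      if (i : ℕ) % 2 = 0 ∧ (j : ℕ) % 2 = 1 then C1 ν Δt lam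
      else if (i : ℕ) % 2 = 1 ∧ (j : ℕ) % 2 = 0 then -ν * C1 ν Δt lam
      else 0
    else if (j : ℕ) / 2 = (i : ℕ) / 2 + 1 then
      -- superdiagonal block T_r
      if (i : ℕ) % 2 = 0 ∧ (j : ℕ) % 2 = 0 then C2 ν Δt lam else 0
    else if (i : ℕ) / 2 = (j : ℕ) / 2 + 1 then
      -- subdiagonal block T_l
      if (i : ℕ) % 2 = 1 ∧ (j : ℕ) % 2 = 1 then C2 ν Δt lam else 0
    else 0


/-- The region 𝒟 ⊂ ℂ of vertical segments: Re z = C₂ cos θ and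
|Im z| ≤ √(C₂² sin²θ + ν C₁²) for some θ ∈ [−π, π]. -/
def Dregion (ν Δt lam : ℝ) : Set ℂ :=
  {z : ℂ | ∃ θ ∈ Set.Icc (-Real.pi) Real.pi,
    z.re = C2 ν Δt lam * Real.cos θ ∧
    |z.im| ≤ Real.sqrt (C2 ν Δt lam ^ 2 * Real.sin θ ^ 2 + ν * C1 ν Δt lam ^ 2)}

/-! After the even-odd reordering of the unknowns, `T^PS_N` becomes `[[d S, c], [-ν c, d Sᴴ]]` with
`c = C₁`, `d = C₂` and `S` the nilpotent shift. In the norm `ν ‖u‖² + ‖w‖²` the `c`-part is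
skew-adjoint, so the real part of an eigenvalue is bounded by `|d| ‖S‖`. Moreover the cross terms
between the `c`-part and the `d`-part of `‖T (u, w)‖²` cancel, because `⟪w, S u⟫ = ⟪Sᴴ w, u⟫`, so
`‖μ‖² ≤ ν c² + d² ‖S‖²`. Since `‖S‖ ≤ 1`, these two bounds describe `𝒟`. -/

open ContinuousLinearMap Matrix RCLike
open scoped InnerProduct InnerProductSpace Matrix.Norms.L2Operator

section WeightedNorm

variable {E : Type*} [NormedAddCommGroup E] {ν : ℝ} {u w : E}

/-- The square of the weighted Hilbert norm on pairs `(u, w)` in which the coupling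
`(u, w) ↦ (c w, -ν c u)` is skew-adjoint. -/
def weightedNormSq (ν : ℝ) (u w : E) : ℝ := ν * ‖u‖ ^ 2 + ‖w‖ ^ 2

lemma weightedNormSq_pos (hν : 0 < ν) (h : u ≠ 0 ∨ w ≠ 0) : 0 < weightedNormSq ν u w := by
  unfold weightedNormSq
  rcases h with h | h <;> positivity

end WeightedNorm

section CoupledEigenvector

variable {𝕜 E : Type*} [RCLike 𝕜] [NormedAddCommGroup E] [InnerProductSpace 𝕜 E]

lemma abs_re_inner_apply_self_le (S : E →L[𝕜] E) (u : E) : |re ⟪u, S u⟫_𝕜| ≤ ‖S‖ * ‖u‖ ^ 2 :=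
  calc
    |re ⟪u, S u⟫_𝕜| ≤ ‖u‖ * ‖S u‖ := (abs_re_le_norm _).trans (norm_inner_le_norm _ _)
    _ ≤ ‖u‖ * (‖S‖ * ‖u‖) := by gcongr; exact S.le_opNorm u
    _ = ‖S‖ * ‖u‖ ^ 2 := by ring

lemma re_mul_norm_sq_eq_re_inner (μ : 𝕜) (u : E) : re μ * ‖u‖ ^ 2 = re ⟪u, μ • u⟫_𝕜 := by
  rw [inner_smul_right, inner_self_eq_norm_sq_to_K, ← ofReal_pow, re_mul_ofReal]

lemma norm_ofReal_smul_add_sq (a b : ℝ) (x y : E) :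
    ‖(a : 𝕜) • x + (b : 𝕜) • y‖ ^ 2 =
      a ^ 2 * ‖x‖ ^ 2 + 2 * (a * b * re ⟪x, y⟫_𝕜) + b ^ 2 * ‖y‖ ^ 2 := by
  rw [norm_add_sq (𝕜 := 𝕜), inner_smul_left, inner_smul_right, conj_ofReal, ← mul_assoc,
    ← ofReal_mul, re_ofReal_mul, norm_smul, norm_smul, norm_ofReal, norm_ofReal, mul_pow, mul_pow,
    sq_abs, sq_abs]

variable [CompleteSpace E] {S : E →L[𝕜] E} {ν c d : ℝ} {μ : 𝕜} {u w : E}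

lemma weightedNormSq_apply_adjoint_le (hν : 0 ≤ ν) :
    weightedNormSq ν (S u) ((S†) w) ≤ ‖S‖ ^ 2 * weightedNormSq ν u w := by
  have hu : ‖S u‖ ≤ ‖S‖ * ‖u‖ := S.le_opNorm u
  have hw : ‖(S†) w‖ ≤ ‖S‖ * ‖w‖ := by simpa using (S†).le_opNorm w
  calc
    weightedNormSq ν (S u) ((S†) w) ≤ ν * (‖S‖ * ‖u‖) ^ 2 + (‖S‖ * ‖w‖) ^ 2 := by
      unfold weightedNormSq; gcongr
    _ = ‖S‖ ^ 2 * weightedNormSq ν u w := by unfold weightedNormSq; ring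

lemma re_mul_weightedNormSq_of_coupled (hu : μ • u = (d : 𝕜) • S u + (c : 𝕜) • w)
    (hw : μ • w = (-(ν * c) : 𝕜) • u + (d : 𝕜) • (S†) w) :
    re μ * weightedNormSq ν u w = d * (ν * re ⟪u, S u⟫_𝕜 + re ⟪w, (S†) w⟫_𝕜) := by
  have hre_u : re μ * ‖u‖ ^ 2 = d * re ⟪u, S u⟫_𝕜 + c * re ⟪u, w⟫_𝕜 := by
    rw [re_mul_norm_sq_eq_re_inner, hu, inner_add_right, inner_smul_right, inner_smul_right,
      map_add, re_ofReal_mul, re_ofReal_mul]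
  have hre_w : re μ * ‖w‖ ^ 2 = -(ν * c) * re ⟪u, w⟫_𝕜 + d * re ⟪w, (S†) w⟫_𝕜 := by
    rw [re_mul_norm_sq_eq_re_inner, hw, ← ofReal_mul, ← ofReal_neg, inner_add_right,
      inner_smul_right, inner_smul_right, map_add, re_ofReal_mul, re_ofReal_mul,
      inner_re_symm w u]
  unfold weightedNormSq
  linear_combination ν * hre_u + hre_w

lemma norm_sq_mul_weightedNormSq_of_coupled (hu : μ • u = (d : 𝕜) • S u + (c : 𝕜) • w)
    (hw : μ • w = (-(ν * c) : 𝕜) • u + (d : 𝕜) • (S†) w) :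
    ‖μ‖ ^ 2 * weightedNormSq ν u w =
      ν * c ^ 2 * weightedNormSq ν u w + d ^ 2 * weightedNormSq ν (S u) ((S†) w) := by
  have hnorm_u : ‖μ‖ ^ 2 * ‖u‖ ^ 2 =
      d ^ 2 * ‖S u‖ ^ 2 + 2 * (d * c * re ⟪S u, w⟫_𝕜) + c ^ 2 * ‖w‖ ^ 2 := by
    rw [← mul_pow, ← norm_smul, hu, norm_ofReal_smul_add_sq]
  have hnorm_w : ‖μ‖ ^ 2 * ‖w‖ ^ 2 =
      (-(ν * c)) ^ 2 * ‖u‖ ^ 2 + 2 * (-(ν * c) * d * re ⟪S u, w⟫_𝕜) + d ^ 2 * ‖(S†) w‖ ^ 2 := by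
    rw [← mul_pow, ← norm_smul, hw, ← ofReal_mul, ← ofReal_neg, norm_ofReal_smul_add_sq,
      adjoint_inner_right]
  unfold weightedNormSq
  linear_combination ν * hnorm_u + hnorm_w

lemma abs_re_le_of_coupled (hν : 0 < ν) (hne : u ≠ 0 ∨ w ≠ 0)
    (hu : μ • u = (d : 𝕜) • S u + (c : 𝕜) • w)
    (hw : μ • w = (-(ν * c) : 𝕜) • u + (d : 𝕜) • (S†) w) :
    |re μ| ≤ |d| * ‖S‖ := by
  have hpos := weightedNormSq_pos hν hne
  have hSu := abs_re_inner_apply_self_le S u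
  have hSw : |re ⟪w, (S†) w⟫_𝕜| ≤ ‖S‖ * ‖w‖ ^ 2 := by
    simpa using abs_re_inner_apply_self_le (S†) w
  refine le_of_mul_le_mul_right ?_ hpos
  calc
    |re μ| * weightedNormSq ν u w = |re μ * weightedNormSq ν u w| := by
      rw [abs_mul, abs_of_pos hpos]
    _ = |d| * |ν * re ⟪u, S u⟫_𝕜 + re ⟪w, (S†) w⟫_𝕜| := by
      rw [re_mul_weightedNormSq_of_coupled hu hw, abs_mul]
    _ ≤ |d| * (ν * |re ⟪u, S u⟫_𝕜| + |re ⟪w, (S†) w⟫_𝕜|) := by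
      gcongr
      exact (abs_add_le _ _).trans_eq (by rw [abs_mul, abs_of_pos hν])
    _ ≤ |d| * (ν * (‖S‖ * ‖u‖ ^ 2) + ‖S‖ * ‖w‖ ^ 2) := by gcongr
    _ = |d| * ‖S‖ * weightedNormSq ν u w := by unfold weightedNormSq; ring

lemma norm_sq_le_of_coupled (hν : 0 < ν) (hne : u ≠ 0 ∨ w ≠ 0)
    (hu : μ • u = (d : 𝕜) • S u + (c : 𝕜) • w)
    (hw : μ • w = (-(ν * c) : 𝕜) • u + (d : 𝕜) • (S†) w) :
    ‖μ‖ ^ 2 ≤ ν * c ^ 2 + d ^ 2 * ‖S‖ ^ 2 := by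
  refine le_of_mul_le_mul_right ?_ (weightedNormSq_pos hν hne)
  calc
    ‖μ‖ ^ 2 * weightedNormSq ν u w =
        ν * c ^ 2 * weightedNormSq ν u w + d ^ 2 * weightedNormSq ν (S u) ((S†) w) :=
      norm_sq_mul_weightedNormSq_of_coupled hu hw
    _ ≤ ν * c ^ 2 * weightedNormSq ν u w + d ^ 2 * (‖S‖ ^ 2 * weightedNormSq ν u w) := by
      gcongr
      exact weightedNormSq_apply_adjoint_le hν.le
    _ = (ν * c ^ 2 + d ^ 2 * ‖S‖ ^ 2) * weightedNormSq ν u w := by ring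

end CoupledEigenvector

section CoupledMatrix

lemma exists_mulVec_eq_smul_of_isRoot_charpoly {K n : Type*} [Field K] [Fintype n] [DecidableEq n]
    {A : Matrix n n K} {μ : K} (h : A.charpoly.IsRoot μ) : ∃ v ≠ 0, A *ᵥ v = μ • v := by
  rw [← charpoly_toLin', ← Module.End.hasEigenvalue_iff_isRoot_charpoly] at h
  obtain ⟨v, hv⟩ := h.exists_hasEigenvector
  exact ⟨v, hv.2, hv.apply_eq_smul⟩

variable {𝕜 n : Type*} [RCLike 𝕜] [Fintype n] [DecidableEq n]

/-- The block matrix `[[d S, c], [-ν c, d Sᴴ]]`; the matrix `T^PS_N` has this form once its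
unknowns are reordered. -/
def coupledMatrix (ν c d : ℝ) (S : Matrix n n 𝕜) : Matrix (n ⊕ n) (n ⊕ n) 𝕜 :=
  fromBlocks ((d : 𝕜) • S) ((c : 𝕜) • 1) ((-(ν * c) : 𝕜) • 1) ((d : 𝕜) • Sᴴ)

variable {ν c d : ℝ} {S : Matrix n n 𝕜} {μ : 𝕜}

lemma exists_coupled_of_isRoot_charpoly (h : (coupledMatrix ν c d S).charpoly.IsRoot μ) :
    ∃ u w : EuclideanSpace 𝕜 n, (u ≠ 0 ∨ w ≠ 0) ∧
      μ • u = (d : 𝕜) • toEuclideanCLM (𝕜 := 𝕜) S u + (c : 𝕜) • w ∧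
      μ • w = (-(ν * c) : 𝕜) • u + (d : 𝕜) • ((toEuclideanCLM (𝕜 := 𝕜) S)†) w := by
  obtain ⟨v, hv_ne, hv⟩ := exists_mulVec_eq_smul_of_isRoot_charpoly h
  have hadj : (toEuclideanCLM (𝕜 := 𝕜) S)† = toEuclideanCLM (𝕜 := 𝕜) Sᴴ :=
    (map_star (toEuclideanCLM (𝕜 := 𝕜) (n := n)) S).symm
  rw [coupledMatrix, fromBlocks_mulVec] at hv
  refine ⟨WithLp.toLp 2 (v ∘ Sum.inl), WithLp.toLp 2 (v ∘ Sum.inr), ?_, ?_, ?_⟩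
  · contrapose! hv_ne
    simp only [WithLp.toLp_eq_zero] at hv_ne
    rw [← Sum.elim_comp_inl_inr v, hv_ne.1, hv_ne.2, Sum.elim_zero_zero]
  · ext i
    simpa [smul_mulVec] using (congrFun hv (Sum.inl i)).symm
  · ext i
    simpa [hadj, smul_mulVec, neg_mulVec] using (congrFun hv (Sum.inr i)).symm

theorem abs_re_le_of_isRoot_charpoly_coupledMatrix (hν : 0 < ν)
    (h : (coupledMatrix ν c d S).charpoly.IsRoot μ) : |re μ| ≤ |d| * ‖S‖ := by
  obtain ⟨u, w, hne, hu, hw⟩ := exists_coupled_of_isRoot_charpoly h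
  exact abs_re_le_of_coupled hν hne hu hw

theorem norm_sq_le_of_isRoot_charpoly_coupledMatrix (hν : 0 < ν)
    (h : (coupledMatrix ν c d S).charpoly.IsRoot μ) :
    ‖μ‖ ^ 2 ≤ ν * c ^ 2 + d ^ 2 * ‖S‖ ^ 2 := by
  obtain ⟨u, w, hne, hu, hw⟩ := exists_coupled_of_isRoot_charpoly h
  exact norm_sq_le_of_coupled hν hne hu hw

end CoupledMatrix

section ShiftMatrix

/-- The nilpotent shift matrix, with ones on the superdiagonal. -/
def shiftMatrix (R : Type*) [Zero R] [One R] (n : ℕ) : Matrix (Fin n) (Fin n) R :=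
  of fun i j => if (j : ℕ) = i + 1 then 1 else 0

variable {𝕜 : Type*} [RCLike 𝕜]

lemma conjTranspose_shiftMatrix_mul_self (n : ℕ) :
    (shiftMatrix 𝕜 n)ᴴ * shiftMatrix 𝕜 n =
      diagonal fun j : Fin n => if (j : ℕ) = 0 then 0 else 1 := by
  ext i j
  simp only [mul_apply, conjTranspose_apply, shiftMatrix, of_apply, diagonal_apply]
  by_cases hj : (j : ℕ) = 0
  · simp +contextual [hj]
  · have hsucc : (j : ℕ) - 1 + 1 = j := by omega
    rw [Finset.sum_eq_single ⟨j - 1, by omega⟩]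
    · by_cases hij : i = j <;> simp [hij, hsucc, hj, Fin.val_inj]
    · intro k _ hk
      have hne : (j : ℕ) ≠ k + 1 := fun h => hk (Fin.ext (by simp [h]))
      simp [hne]
    · simp

lemma l2_opNorm_shiftMatrix_le_one (n : ℕ) : ‖shiftMatrix 𝕜 n‖ ≤ 1 := by
  have hsq : ‖shiftMatrix 𝕜 n‖ * ‖shiftMatrix 𝕜 n‖ ≤ 1 := by
    rw [← l2_opNorm_conjTranspose_mul_self, conjTranspose_shiftMatrix_mul_self,
      l2_opNorm_diagonal, pi_norm_le_iff_of_nonneg zero_le_one]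
    intro j
    split_ifs <;> simp
  nlinarith

end ShiftMatrix

/-- The reordering of the unknowns that lists the even (zero-based) indices first and the odd ones
last, as a map from the two halves. -/
def evenOddEquiv (n : ℕ) : Fin n ⊕ Fin n ≃ Fin (2 * n) where
  toFun := Sum.elim (fun k => ⟨2 * k, by omega⟩) (fun k => ⟨2 * k + 1, by omega⟩)
  invFun i := if (i : ℕ) % 2 = 0 then .inl ⟨i / 2, by omega⟩ else .inr ⟨i / 2, by omega⟩
  left_inv := by
    rintro (k | k)
    · simp
    · have hdiv : (2 * (k : ℕ) + 1) / 2 = k := by omega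
      simp [Nat.add_mod, hdiv]
  right_inv i := by
    dsimp only
    split_ifs <;> simp only [Sum.elim_inl, Sum.elim_inr, Fin.ext_iff] <;> omega

lemma reindex_TPS_eq_coupledMatrix (ν Δt lam : ℝ) (N : ℕ) :
    reindex (evenOddEquiv (N - 1)).symm (evenOddEquiv (N - 1)).symm
        ((TPS ν Δt lam N).map fun x => (x : ℂ)) =
      coupledMatrix ν (C1 ν Δt lam) (C2 ν Δt lam) (shiftMatrix ℂ (N - 1)) := by
  ext (i | i) (j | j) <;>
    simp only [TPS, coupledMatrix, shiftMatrix, evenOddEquiv, reindex_apply, submatrix_apply,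
      Matrix.map_apply, Equiv.symm_symm, Equiv.coe_fn_mk, Sum.elim_inl, Sum.elim_inr,
      fromBlocks_apply₁₁, fromBlocks_apply₁₂, fromBlocks_apply₂₁, fromBlocks_apply₂₂,
      Matrix.smul_apply, conjTranspose_apply, of_apply, one_apply, Fin.ext_iff] <;>
    split_ifs <;> first | omega | simp

section Region

open Real

lemma exists_eq_mul_cos {x r : ℝ} (h : |x| ≤ |r|) : ∃ θ ∈ Set.Icc (-π) π, x = r * cos θ := by
  have hdiv : |x / r| ≤ 1 := by
    rw [abs_div]
    exact div_le_one_of_le₀ h (abs_nonneg r)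
  refine ⟨arccos (x / r), ⟨by linarith [arccos_nonneg (x / r), pi_pos], arccos_le_pi _⟩, ?_⟩
  rw [cos_arccos (abs_le.1 hdiv).1 (abs_le.1 hdiv).2, mul_div_cancel_of_imp']
  rintro rfl
  simpa using h

lemma mem_Dregion_of_abs_re_le_of_norm_sq_le {ν Δt lam : ℝ} {z : ℂ}
    (hre : |z.re| ≤ |C2 ν Δt lam|)
    (hnorm : ‖z‖ ^ 2 ≤ ν * C1 ν Δt lam ^ 2 + C2 ν Δt lam ^ 2) : z ∈ Dregion ν Δt lam := by
  obtain ⟨θ, hθ, hcos⟩ := exists_eq_mul_cos hre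
  refine ⟨θ, hθ, hcos, abs_le_sqrt ?_⟩
  rw [Complex.sq_norm, Complex.normSq_apply, hcos] at hnorm
  linear_combination hnorm - C2 ν Δt lam ^ 2 * sin_sq_add_cos_sq θ

end Region

theorem eigenvalues_in_Dregion_general {ν : ℝ} (hν : 0 < ν) (Δt lam : ℝ) (N : ℕ) {μ : ℂ}
    (hμ : ((TPS ν Δt lam N).map (fun x => (x : ℂ))).charpoly.IsRoot μ) :
    μ ∈ Dregion ν Δt lam := by
  have hshift : ‖shiftMatrix ℂ (N - 1)‖ ≤ 1 := l2_opNorm_shiftMatrix_le_one _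
  rw [← charpoly_reindex (evenOddEquiv (N - 1)).symm, reindex_TPS_eq_coupledMatrix] at hμ
  apply mem_Dregion_of_abs_re_le_of_norm_sq_le
  · calc
      |μ.re| ≤ |C2 ν Δt lam| * ‖shiftMatrix ℂ (N - 1)‖ :=
        abs_re_le_of_isRoot_charpoly_coupledMatrix hν hμ
      _ ≤ |C2 ν Δt lam| := mul_le_of_le_one_right (abs_nonneg _) hshift
  · calc
      ‖μ‖ ^ 2 ≤ ν * C1 ν Δt lam ^ 2 + C2 ν Δt lam ^ 2 * ‖shiftMatrix ℂ (N - 1)‖ ^ 2 :=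
        norm_sq_le_of_isRoot_charpoly_coupledMatrix hν hμ
      _ ≤ ν * C1 ν Δt lam ^ 2 + C2 ν Δt lam ^ 2 := by
        gcongr
        exact mul_le_of_le_one_right (sq_nonneg _) (pow_le_one₀ (norm_nonneg _) hshift)

/-- for every N ≥ 2, every complex eigenvalue of `T^PS_N` belongs to 𝒟. -/
theorem eigenvalues_in_Dregion (ν Δt lam : ℝ)
    (hν : 0 < ν) (hΔt : 0 < Δt) (hlam : 0 < lam) :
    ∀ N : ℕ, 2 ≤ N → ∀ μ : ℂ,
      ((TPS ν Δt lam N).map (fun x => (x : ℂ))).charpoly.IsRoot μ →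
      μ ∈ Dregion ν Δt lam := by
  exact fun N _ _ hμ => eigenvalues_in_Dregion_general hν Δt lam N hμ
end
end

section
/- Let ν > 0, Δt > 0, λ > 0, σ := √(λ² + 1/ν), C₁ := −ν⁻¹·sinh(σΔt)/(σ·cosh(σΔt) + λ·sinh(σΔt)) and C₂ := σ/(σ·cosh(σΔt) + λ·sinh(σΔt)). Let D be the 2(N−1)×2(N−1) block diagonal matrix whose N−1 diagonal 2×2 blocks all equal diag(1, √ν). Then for every integer N ≥ 3, the maximum over rows i of the Euclidean norm of the i-th row of D⁻¹·T^PS_N·D equals √(ν·C₁² + C₂²); that is, max_i (Σ_j ((D⁻¹·T^PS_N·D)_{ij})²)^{1/2} = √(ν·C₁² + C₂²). -/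
noncomputable section

/-- The block diagonal scaling matrix D with 2×2 diagonal blocks diag(1, √ν). -/
def Dmat (ν : ℝ) (N : ℕ) : Matrix (Fin (2 * (N - 1))) (Fin (2 * (N - 1))) ℝ :=
  Matrix.diagonal (fun i => if (i : ℕ) % 2 = 0 then 1 else Real.sqrt ν)

/-!
Conjugating by `D` balances the two entries `C₁` and `-ν C₁` of a diagonal block to `√ν C₁` and
`-√ν C₁`, and fixes the entries `C₂`, which couple components of the same parity. Every row then has
exactly one entry `±√ν C₁` and at most one entry `C₂`. With at least two blocks, the first row does
contain `C₂`.
-/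

open Matrix

section ConjugationByDiagonal

variable {n K : Type*} [Fintype n] [DecidableEq n] [Field K]

theorem inv_diagonal_mul_mul_diagonal_apply {d : n → K} (hd : ∀ i, d i ≠ 0) (A : Matrix n n K)
    (i j : n) : ((diagonal d)⁻¹ * A * diagonal d) i j = (d i)⁻¹ * A i j * d j := by
  have hinv : (diagonal d)⁻¹ = diagonal d⁻¹ := by
    refine inv_eq_left_inv ?_
    rw [diagonal_mul_diagonal, ← diagonal_one]
    exact congrArg diagonal (funext fun k => inv_mul_cancel₀ (hd k))
  rw [hinv, mul_diagonal, diagonal_mul, Pi.inv_apply]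

end ConjugationByDiagonal

section SumOverFin

variable {M : Type*} [AddCommMonoid M]

theorem sum_fin_ite_val_eq (n k : ℕ) (x : M) :
    ∑ j : Fin n, (if (j : ℕ) = k then x else 0) = if k < n then x else 0 := by
  rw [Fin.sum_univ_eq_sum_range (fun j => if j = k then x else 0), Finset.sum_ite_eq']
  simp only [Finset.mem_range]

end SumOverFin

/-- The block tridiagonal Toeplitz matrix with `m` diagonal blocks `[[0, p], [q, 0]]`, superdiagonal
blocks `[[c, 0], [0, 0]]` and subdiagonal blocks `[[0, 0], [0, c]]`, described through its at most
two nonzero entries per row. It is the common shape of `T^PS_N` and of its rescaling by `D`. -/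
def blockToeplitz {R : Type*} [Zero R] (p q c : R) (m : ℕ) :
    Matrix (Fin (2 * m)) (Fin (2 * m)) R :=
  fun i j =>
    if (i : ℕ) % 2 = 0 then
      if (j : ℕ) = i + 1 then p else if (j : ℕ) = i + 2 then c else 0
    else
      if (j : ℕ) + 1 = i then q else if (j : ℕ) + 2 = i then c else 0

theorem TPS_eq_blockToeplitz (ν Δt lam : ℝ) (N : ℕ) :
    TPS ν Δt lam N =
      blockToeplitz (C1 ν Δt lam) (-ν * C1 ν Δt lam) (C2 ν Δt lam) (N - 1) := by
  ext i j
  unfold TPS blockToeplitz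
  split_ifs <;> first | rfl | omega

theorem Dmat_inv_mul_blockToeplitz_mul_Dmat {ν : ℝ} (hν : 0 < ν) (p q c : ℝ) (N : ℕ) :
    (Dmat ν N)⁻¹ * blockToeplitz p q c (N - 1) * Dmat ν N =
      blockToeplitz (p * √ν) ((√ν)⁻¹ * q) c (N - 1) := by
  have hsqrt : √ν ≠ 0 := (Real.sqrt_pos.2 hν).ne'
  have hcoupling : (√ν)⁻¹ * c * √ν = c := by field_simp
  ext i j
  rw [Dmat, inv_diagonal_mul_mul_diagonal_apply (fun k => by split_ifs <;> simp [hsqrt])]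
  unfold blockToeplitz
  split_ifs <;> first | omega | exact hcoupling | simp

section RowNorms

variable {R : Type*} [Semiring R] (p q c : R) {m : ℕ}

theorem sum_sq_blockToeplitz_of_even {i : Fin (2 * m)} (hi : (i : ℕ) % 2 = 0) :
    ∑ j, blockToeplitz p q c m i j ^ 2 = p ^ 2 + if (i : ℕ) + 2 < 2 * m then c ^ 2 else 0 := by
  have hentry (j : Fin (2 * m)) : blockToeplitz p q c m i j ^ 2 =
      (if (j : ℕ) = i + 1 then p ^ 2 else 0) + if (j : ℕ) = i + 2 then c ^ 2 else 0 := by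
    unfold blockToeplitz
    split_ifs <;> first | omega | simp
  simp only [hentry, Finset.sum_add_distrib, sum_fin_ite_val_eq]
  rw [if_pos (show (i : ℕ) + 1 < 2 * m by omega)]

theorem sum_sq_blockToeplitz_of_odd {i : Fin (2 * m)} (hi : (i : ℕ) % 2 = 1) :
    ∑ j, blockToeplitz p q c m i j ^ 2 = q ^ 2 + if 2 ≤ (i : ℕ) then c ^ 2 else 0 := by
  have hentry (j : Fin (2 * m)) : blockToeplitz p q c m i j ^ 2 =
      (if (j : ℕ) = i - 1 then q ^ 2 else 0) +
        if 2 ≤ (i : ℕ) then (if (j : ℕ) = i - 2 then c ^ 2 else 0) else 0 := by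
    unfold blockToeplitz
    split_ifs <;> first | omega | simp
  simp only [hentry, Finset.sum_add_distrib, Finset.sum_ite_irrel, Finset.sum_const_zero,
    sum_fin_ite_val_eq]
  rw [if_pos (show (i : ℕ) - 1 < 2 * m by omega), if_pos (show (i : ℕ) - 2 < 2 * m by omega)]

end RowNorms

theorem sum_sq_blockToeplitz_neg_le (p c : ℝ) {m : ℕ} (i : Fin (2 * m)) :
    ∑ j, blockToeplitz p (-p) c m i j ^ 2 ≤ p ^ 2 + c ^ 2 := by
  have hc : 0 ≤ c ^ 2 := sq_nonneg c
  rcases Nat.mod_two_eq_zero_or_one i with hi | hi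
  · rw [sum_sq_blockToeplitz_of_even _ _ _ hi]
    split_ifs <;> linarith
  · rw [sum_sq_blockToeplitz_of_odd _ _ _ hi, neg_sq]
    split_ifs <;> linarith

theorem isGreatest_rowNorm_blockToeplitz_neg (p c : ℝ) {m : ℕ} (hm : 2 ≤ m) :
    IsGreatest (Set.range fun i => √(∑ j, blockToeplitz p (-p) c m i j ^ 2))
      √(p ^ 2 + c ^ 2) := by
  constructor
  · let firstRow : Fin (2 * m) := ⟨0, by omega⟩
    refine ⟨firstRow, congrArg Real.sqrt ?_⟩
    rw [sum_sq_blockToeplitz_of_even _ _ _ (Nat.zero_mod 2),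
      if_pos (show (firstRow : ℕ) + 2 < 2 * m by simp only [firstRow]; omega)]
  · rintro _ ⟨i, rfl⟩
    exact Real.sqrt_le_sqrt (sum_sq_blockToeplitz_neg_le p c i)

theorem scaled_matrix_row_norm_general {ν : ℝ} (hν : 0 < ν) (a c : ℝ) {N : ℕ} (hN : 3 ≤ N) :
    IsGreatest
      (Set.range fun i => √(∑ j,
        ((Dmat ν N)⁻¹ * blockToeplitz a (-ν * a) c (N - 1) * Dmat ν N) i j ^ 2))
      √(ν * a ^ 2 + c ^ 2) := by
  have hlower : (√ν)⁻¹ * (-ν * a) = -(a * √ν) := by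
    rw [← mul_assoc, mul_neg, inv_mul_eq_div, Real.div_sqrt]
    ring
  have hsq : ν * a ^ 2 = (a * √ν) ^ 2 := by
    rw [mul_pow, Real.sq_sqrt hν.le, mul_comm]
  rw [Dmat_inv_mul_blockToeplitz_mul_Dmat hν, hlower, hsq]
  exact isGreatest_rowNorm_blockToeplitz_neg (a * √ν) c (by omega)

/-- for N ≥ 3, the maximum over rows of the Euclidean norm of the rows of
D⁻¹ T^PS_N D equals √(ν C₁² + C₂²). -/
theorem scaled_matrix_row_norm (ν Δt lam : ℝ)
    (hν : 0 < ν) (hΔt : 0 < Δt) (hlam : 0 < lam) :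
    ∀ N : ℕ, 3 ≤ N →
      (⨆ i : Fin (2 * (N - 1)),
        Real.sqrt (∑ j : Fin (2 * (N - 1)),
          (((Dmat ν N)⁻¹ * TPS ν Δt lam N * Dmat ν N) i j) ^ 2)) =
      Real.sqrt (ν * C1 ν Δt lam ^ 2 + C2 ν Δt lam ^ 2) := by
  intro N hN
  rw [TPS_eq_blockToeplitz]
  exact (scaled_matrix_row_norm_general hν _ _ hN).csSup_eq
end
end
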